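/- Let f : ℝ → ℂ be Bohr almost periodic and let L > 0. Then: (a) the functions A_{n,L}[f] converge uniformly on ℝ, as n → ∞, to a function f^{(L)} : ℝ → ℂ; (b) f^{(L)} is continuous and periodic with period L; and (c) for every ω ∈ ℝ, the limit lim_{M→∞} (1/(2M)) ∫_{−M}^{M} f^{(L)}(x) e^{−2πiωx} dx exists and equals \hat f(ω) if L·ω ∈ ℤ, and equals 0 if L·ω ∉ ℤ. -/

import Mathlib

/-!
The proof rests on one consequence of almost periodicity: for each `ε`, every translate `f(· + mL)`,
`m : ℕ`, is uniformly `ε`-close to one of finitely many translates `f(· + jL)`, `j < N`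
(`BohrAP.exists_finite_translates`; total boundedness of the orbit). Translating `A_n f` by `jL`
changes it by `O(j / n)`, so for `n` large `A_n f` is `ε`-invariant under *all* translations by `mL`
(`BohrAP.avgOp_almost_invariant`). Averaging this over `m < k` gives `A_k A_n f ≈ A_n f`, and since
`A_k A_n = A_n A_k`, for `k` and `n` both large `A_n f ≈ A_k A_n f = A_n A_k f ≈ A_k f`: the averages
are uniformly Cauchy.

Continuity passes to the uniform limit, and periodicity follows from
`A_n f(x + L) - A_n f(x) = O(1 / n)`. Fourier coefficients are stable under uniform limits, and a
translation by `a` multiplies the coefficient at `ω` by `e^{2πiωa}`, so the coefficient of `f^{(L)}`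
is `lim_n n⁻¹ ∑_{m < n} z ^ m` times that of `f`, where `z = e^{2πiωL}`. This limit is `1` if `z = 1`,
that is `Lω ∈ ℤ`, and `0` otherwise.
-/

open MeasureTheory Filter Topology
open scoped ENNReal NNReal

noncomputable section

/-- `f : ℝ → ℂ` is Bohr almost periodic. -/
def BohrAP (f : ℝ → ℂ) : Prop :=
  Continuous f ∧ ∀ ε : ℝ, 0 < ε → ∃ L : ℝ, 0 < L ∧ ∀ a : ℝ,
    ∃ τ, τ ∈ Set.Icc a (a + L) ∧ ∀ x : ℝ, ‖f (x - τ) - f x‖ < ε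

/-- The Fourier coefficient of `f` at frequency `ω` equals `c`. -/
def HasFourierCoeff (f : ℝ → ℂ) (ω : ℝ) (c : ℂ) : Prop :=
  Tendsto (fun L : ℝ => (2 * (L : ℂ))⁻¹ *
      ∫ x in (-L)..L, f x * Complex.exp (((-(2 * Real.pi * ω * x) : ℝ) : ℂ) * Complex.I))
    atTop (nhds c)

/-- `f'` is a weak derivative of `f` on `ℝ`. -/
def HasWeakDeriv (f f' : ℝ → ℂ) : Prop :=
  LocallyIntegrable f' volume ∧ ∀ x : ℝ, f x = f 0 + ∫ y in (0:ℝ)..x, f' y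

/-- The `S^{1,2}(ℝ)`-norm of `f` (with weak derivative `f'`), valued in `ℝ≥0∞`. -/
def S12 (f f' : ℝ → ℂ) : ℝ≥0∞ :=
  ⨆ y : ℝ, (∫⁻ x in Set.Ioc y (y + 1),
    ((‖f x‖₊ : ℝ≥0∞) ^ 2 + (‖f' x‖₊ : ℝ≥0∞) ^ 2)) ^ (1/2 : ℝ)

/-- The averaging operator `A_{n,L}[f]`. -/
def avgOp (f : ℝ → ℂ) (L : ℝ) (n : ℕ) (x : ℝ) : ℂ :=
  (n : ℂ)⁻¹ * ∑ m ∈ Finset.range n, f (x + m * L)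

/-- `f` is limit periodic: a uniform limit of continuous periodic functions. -/
def LimitPeriodic (f : ℝ → ℂ) : Prop :=
  ∃ g : ℕ → ℝ → ℂ, (∀ j, Continuous (g j)) ∧
    (∀ j, ∃ P : ℝ, 0 < P ∧ Function.Periodic (g j) P) ∧
    TendstoUniformly g f atTop


/-! ### Bounds and compactness of translates -/

lemma BohrAP.exists_bound {f : ℝ → ℂ} (hf : BohrAP f) : ∃ B : ℝ, 0 ≤ B ∧ ∀ x, ‖f x‖ ≤ B := by
  obtain ⟨hc, hap⟩ := hf
  obtain ⟨l, hl, h⟩ := hap 1 one_pos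
  obtain ⟨C, hC⟩ := (isCompact_Icc (a := (0 : ℝ)) (b := l)).exists_bound_of_continuousOn
    hc.continuousOn
  have hC0 : 0 ≤ C := (norm_nonneg _).trans (hC 0 ⟨le_rfl, hl.le⟩)
  refine ⟨C + 1, by linarith, fun x => ?_⟩
  obtain ⟨τ, hτ, hx⟩ := h (x - l)
  have h1 := hC (x - τ) ⟨by linarith [hτ.2], by linarith [hτ.1]⟩
  have h2 := norm_sub_norm_le (f x) (f (x - τ))
  rw [norm_sub_rev] at h2
  linarith [hx x]

lemma BohrAP.exists_modulus {f : ℝ → ℂ} (hf : BohrAP f) {ε : ℝ} (hε : 0 < ε) :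
    ∃ δ : ℝ, 0 < δ ∧ ∀ x y, |x - y| < δ → ‖f x - f y‖ < ε := by
  obtain ⟨hc, hap⟩ := hf
  obtain ⟨l, hl, h⟩ := hap (ε / 3) (by positivity)
  have huc := (isCompact_Icc (a := (-1 : ℝ)) (b := l + 1)).uniformContinuousOn_of_continuous
    hc.continuousOn
  obtain ⟨δ, hδ, hu⟩ := Metric.uniformContinuousOn_iff.1 huc (ε / 3) (by positivity)
  refine ⟨min δ 1, by positivity, fun x y hxy => ?_⟩
  obtain ⟨hxy1, hxy2⟩ := lt_min_iff.1 hxy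
  obtain ⟨hxy3, hxy4⟩ := abs_lt.1 hxy2
  obtain ⟨τ, hτ, ht⟩ := h (x - l)
  have h1 := hu (x - τ) ⟨by linarith [hτ.2], by linarith [hτ.1]⟩
    (y - τ) ⟨by linarith [hτ.2], by linarith [hτ.1]⟩
    (by simpa [Real.dist_eq] using hxy1)
  rw [dist_eq_norm] at h1
  have h2 := ht x
  have h3 := ht y
  rw [norm_sub_rev] at h2
  have : f x - f y = (f x - f (x - τ)) + (f (x - τ) - f (y - τ)) + (f (y - τ) - f y) := by ring
  rw [this]
  linarith [norm_add₃_le (a := f x - f (x - τ)) (b := f (x - τ) - f (y - τ)) (c := f (y - τ) - f y)]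

/-- Total boundedness of the orbit of `f` under translation by `L`, the finite `ε`-net being chosen
inside the orbit. -/
lemma BohrAP.exists_finite_translates {f : ℝ → ℂ} (hf : BohrAP f) (L : ℝ) {ε : ℝ} (hε : 0 < ε) :
    ∃ N : ℕ, ∀ m : ℕ, ∃ j < N, ∀ x, ‖f (x + m * L) - f (x + j * L)‖ ≤ ε := by
  obtain ⟨δ, hδ, hu⟩ := hf.exists_modulus (ε := ε / 3) (by positivity)
  obtain ⟨l, hl, h⟩ := hf.2 (ε / 3) (by positivity)
  -- An almost period carries `m * L` to a point `s m` of `[0, l]` giving almost the same translate.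
  have hs : ∀ m : ℕ, ∃ s : ℝ, 0 ≤ s ∧ s ≤ l ∧ ∀ x, ‖f (x + s) - f (x + m * L)‖ < ε / 3 := by
    intro m
    obtain ⟨τ, hτ, ht⟩ := h (m * L - l)
    refine ⟨m * L - τ, by linarith [hτ.2], by linarith [hτ.1], fun x => ?_⟩
    have := ht (x + m * L)
    rwa [add_sub_assoc] at this
  choose s hs0 hsl hs using hs
  -- Indices whose points `s m` lie in the same cell of width `δ` have close translates.
  let c : ℕ → ℕ := fun m => ⌊s m / δ⌋₊
  have hfin : (Set.range c).Finite := by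
    refine (Set.finite_Iic ⌊l / δ⌋₊).subset ?_
    rintro _ ⟨m, rfl⟩
    exact Nat.floor_mono (div_le_div_of_nonneg_right (hsl m) hδ.le)
  obtain ⟨N, hN⟩ := (hfin.image (Function.invFun c)).bddAbove
  refine ⟨N + 1, fun m => ?_⟩
  obtain ⟨j, hj⟩ : ∃ j, j = Function.invFun c (c m) := ⟨_, rfl⟩
  have hjm : c j = c m := by rw [hj]; exact Function.invFun_eq ⟨m, rfl⟩
  have hjN : j ≤ N := hN ⟨c m, ⟨m, rfl⟩, hj.symm⟩
  refine ⟨j, Nat.lt_succ_of_le hjN, fun x => ?_⟩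
  have key : |s m - s j| < δ := by
    have a1 := Nat.floor_le (div_nonneg (hs0 m) hδ.le)
    have a2 := Nat.lt_floor_add_one (s m / δ)
    have b1 := Nat.floor_le (div_nonneg (hs0 j) hδ.le)
    have b2 := Nat.lt_floor_add_one (s j / δ)
    have e : ((⌊s j / δ⌋₊ : ℕ) : ℝ) = (⌊s m / δ⌋₊ : ℕ) := by exact_mod_cast hjm
    have : |s m / δ - s j / δ| < 1 := by rw [abs_lt]; constructor <;> linarith
    rwa [← sub_div, abs_div, abs_of_pos hδ, div_lt_one hδ] at this
  have h1 := hs m x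
  have h2 := hs j x
  have h3 := hu (x + s m) (x + s j) (by convert key using 2; ring)
  rw [norm_sub_rev] at h1
  have : f (x + m * L) - f (x + j * L) = (f (x + m * L) - f (x + s m)) +
    (f (x + s m) - f (x + s j)) + (f (x + s j) - f (x + j * L)) := by ring
  rw [this]
  linarith [norm_add₃_le (a := f (x + m * L) - f (x + s m))
    (b := f (x + s m) - f (x + s j)) (c := f (x + s j) - f (x + j * L))]

/-! ### Uniform convergence of the averages -/

lemma norm_avg_sub_avg_le {u v : ℕ → ℂ} {ε : ℝ} (hε : 0 ≤ ε) (h : ∀ i, ‖u i - v i‖ ≤ ε) (n : ℕ) :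
    ‖(n : ℂ)⁻¹ * ∑ i ∈ Finset.range n, u i - (n : ℂ)⁻¹ * ∑ i ∈ Finset.range n, v i‖ ≤ ε := by
  rw [← mul_sub, ← Finset.sum_sub_distrib, norm_mul, norm_inv, Complex.norm_natCast]
  have h1 : ‖∑ i ∈ Finset.range n, (u i - v i)‖ ≤ n * ε := by
    refine (norm_sum_le_of_le _ fun i _ => h i).trans ?_
    simp
  rcases Nat.eq_zero_or_pos n with rfl | hn
  · simpa using hε
  · rw [inv_mul_le_iff₀ (by exact_mod_cast hn)]
    exact h1

lemma avgOp_add_sub (f : ℝ → ℂ) (L : ℝ) (n : ℕ) (x : ℝ) :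
    avgOp f L n (x + L) - avgOp f L n x = (n : ℂ)⁻¹ * (f (x + n * L) - f x) := by
  unfold avgOp
  rw [← mul_sub]
  congr 1
  have h1 := Finset.sum_range_succ (fun m : ℕ => f (x + m * L)) n
  have h2 := Finset.sum_range_succ' (fun m : ℕ => f (x + m * L)) n
  have h3 : ∀ m : ℕ, f (x + L + m * L) = f (x + ((m + 1 : ℕ) : ℝ) * L) := fun m => by
    congr 1; push_cast; ring
  simp only [h3]
  rw [h1] at h2
  simp only [Nat.cast_zero, zero_mul, add_zero] at h2
  linear_combination -h2

lemma norm_avgOp_add_sub_le {f : ℝ → ℂ} {B : ℝ} (hB : ∀ x, ‖f x‖ ≤ B) (L : ℝ) (n : ℕ) (x : ℝ) :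
    ‖avgOp f L n (x + L) - avgOp f L n x‖ ≤ 2 * B / n := by
  rw [avgOp_add_sub, norm_mul, norm_inv, Complex.norm_natCast, div_eq_inv_mul]
  refine mul_le_mul_of_nonneg_left ?_ (by positivity)
  linarith [norm_sub_le (f (x + n * L)) (f x), hB (x + n * L), hB x]

lemma norm_avgOp_add_nat_sub_le {f : ℝ → ℂ} {B : ℝ} (hB : ∀ x, ‖f x‖ ≤ B) (L : ℝ) (n j : ℕ)
    (x : ℝ) : ‖avgOp f L n (x + j * L) - avgOp f L n x‖ ≤ j * (2 * B / n) := by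
  induction j with
  | zero => simp
  | succ j ih =>
    have h1 := norm_avgOp_add_sub_le hB L n (x + j * L)
    have h2 := norm_sub_le_norm_sub_add_norm_sub (avgOp f L n (x + j * L + L))
      (avgOp f L n (x + j * L)) (avgOp f L n x)
    have h3 : x + ((j + 1 : ℕ) : ℝ) * L = x + j * L + L := by push_cast; ring
    rw [h3]
    push_cast
    linarith

/-- For large `n`, the average `A_n f` is nearly invariant under all translations by `m * L`,
uniformly in `m`. -/
lemma BohrAP.avgOp_almost_invariant {f : ℝ → ℂ} (hf : BohrAP f) (L : ℝ) {ε : ℝ} (hε : 0 < ε) :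
    ∃ n₀ : ℕ, ∀ n ≥ n₀, ∀ (m : ℕ) (x : ℝ),
      ‖avgOp f L n (x + m * L) - avgOp f L n x‖ ≤ ε := by
  obtain ⟨B, hB0, hB⟩ := hf.exists_bound
  obtain ⟨N, hN⟩ := hf.exists_finite_translates L (ε := ε / 2) (by positivity)
  have hlim : Tendsto (fun n : ℕ => N * (2 * B) / (n : ℝ)) atTop (𝓝 0) :=
    tendsto_const_div_atTop_nhds_zero_nat _
  obtain ⟨n₀, hn₀⟩ := eventually_atTop.1 (hlim.eventually (gt_mem_nhds (half_pos hε)))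
  refine ⟨n₀, fun n hn m x => ?_⟩
  obtain ⟨j, hj, hjm⟩ := hN m
  have h1 : ‖avgOp f L n (x + m * L) - avgOp f L n (x + j * L)‖ ≤ ε / 2 := by
    refine norm_avg_sub_avg_le (by positivity) (fun i => ?_) n
    have := hjm (x + i * L)
    convert this using 4 <;> ring
  have h2 := norm_avgOp_add_nat_sub_le hB L n j x
  have h3 : (j : ℝ) * (2 * B / n) ≤ N * (2 * B) / n := by
    rw [mul_div_assoc (N : ℝ)]
    exact mul_le_mul_of_nonneg_right (by exact_mod_cast hj.le) (by positivity)
  have h4 := hn₀ n hn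
  linarith [norm_sub_le_norm_sub_add_norm_sub (avgOp f L n (x + m * L))
    (avgOp f L n (x + j * L)) (avgOp f L n x)]

lemma avgOp_avgOp_comm (f : ℝ → ℂ) (L : ℝ) (n k : ℕ) (x : ℝ) :
    avgOp (avgOp f L n) L k x = avgOp (avgOp f L k) L n x := by
  unfold avgOp
  simp only [← Finset.mul_sum]
  rw [Finset.sum_comm, mul_left_comm]
  congr 2
  refine Finset.sum_congr rfl fun i _ => Finset.sum_congr rfl fun j _ => ?_
  congr 1; ring

lemma norm_avgOp_sub_le {g : ℝ → ℂ} {L ε : ℝ} (hε : 0 ≤ ε) {x : ℝ}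
    (h : ∀ m : ℕ, ‖g (x + m * L) - g x‖ ≤ ε) {k : ℕ} (hk : k ≠ 0) :
    ‖avgOp g L k x - g x‖ ≤ ε := by
  have := norm_avg_sub_avg_le hε h k
  rwa [Finset.sum_const, Finset.card_range, nsmul_eq_mul,
    inv_mul_cancel_left₀ (by exact_mod_cast hk)] at this

lemma BohrAP.uniformCauchySeqOn_avgOp {f : ℝ → ℂ} (hf : BohrAP f) (L : ℝ) :
    UniformCauchySeqOn (fun n x => avgOp f L n x) atTop Set.univ := by
  rw [Metric.uniformCauchySeqOn_iff]
  intro ε hε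
  obtain ⟨n₀, h⟩ := hf.avgOp_almost_invariant L (ε := ε / 3) (by positivity)
  refine ⟨n₀ + 1, fun n hn k hk x _ => ?_⟩
  have h1 := norm_avgOp_sub_le (k := k) (by positivity) (fun m => h n (by omega) m x) (by omega)
  have h2 := norm_avgOp_sub_le (k := n) (by positivity) (fun m => h k (by omega) m x) (by omega)
  rw [avgOp_avgOp_comm, norm_sub_rev] at h1
  rw [dist_eq_norm]
  linarith [norm_sub_le_norm_sub_add_norm_sub (avgOp f L n x)
    (avgOp (avgOp f L k) L n x) (avgOp f L k x)]

lemma BohrAP.exists_tendstoUniformly_avgOp {f : ℝ → ℂ} (hf : BohrAP f) (L : ℝ) :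
    ∃ g : ℝ → ℂ, TendstoUniformly (fun n x => avgOp f L n x) g atTop := by
  have hC := hf.uniformCauchySeqOn_avgOp L
  have : ∀ x, ∃ y, Tendsto (fun n => avgOp f L n x) atTop (𝓝 y) := fun x =>
    cauchySeq_tendsto_of_complete (hC.cauchySeq (Set.mem_univ x))
  choose g hg using this
  exact ⟨g, tendstoUniformlyOn_univ.1 (hC.tendstoUniformlyOn_of_tendsto fun x _ => hg x)⟩

lemma continuous_avgOp {f : ℝ → ℂ} (hf : Continuous f) (L : ℝ) (n : ℕ) :
    Continuous (avgOp f L n) := by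
  unfold avgOp
  fun_prop

/-! ### Fourier coefficients -/

/-- The character `x ↦ e^{-2πiωx}`, in the form used by `HasFourierCoeff`. -/
def fourierChar (ω x : ℝ) : ℂ := Complex.exp (((-(2 * Real.pi * ω * x) : ℝ) : ℂ) * Complex.I)

lemma norm_fourierChar (ω x : ℝ) : ‖fourierChar ω x‖ = 1 := Complex.norm_exp_ofReal_mul_I _

lemma continuous_fourierChar (ω : ℝ) : Continuous (fourierChar ω) := by
  unfold fourierChar
  fun_prop

lemma fourierChar_add (ω x y : ℝ) :
    fourierChar ω (x + y) = fourierChar ω x * fourierChar ω y := by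
  unfold fourierChar
  rw [← Complex.exp_add]
  congr 1; push_cast; ring

lemma fourierChar_neg_nat_mul (ω L : ℝ) (m : ℕ) :
    fourierChar ω (-(m * L)) = fourierChar ω (-L) ^ m := by
  unfold fourierChar
  rw [← Complex.exp_nat_mul]
  congr 1; push_cast; ring

lemma fourierChar_neg_eq_one_iff (ω L : ℝ) :
    fourierChar ω (-L) = 1 ↔ ∃ n : ℤ, L * ω = n := by
  have h2 : (2 * Real.pi * Complex.I : ℂ) ≠ 0 := Complex.two_pi_I_ne_zero
  unfold fourierChar
  rw [Complex.exp_eq_one_iff]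
  refine exists_congr fun n => ?_
  have : (((-(2 * Real.pi * ω * -L) : ℝ) : ℂ) * Complex.I) =
      ((L * ω : ℝ) : ℂ) * (2 * Real.pi * Complex.I) := by push_cast; ring
  rw [this, mul_left_inj' h2]
  exact_mod_cast Iff.rfl

lemma hasFourierCoeff_iff {f : ℝ → ℂ} {ω : ℝ} {c : ℂ} :
    HasFourierCoeff f ω c ↔ Tendsto (fun M : ℝ => (2 * (M : ℂ))⁻¹ *
      ∫ x in (-M)..M, f x * fourierChar ω x) atTop (𝓝 c) := Iff.rfl

lemma HasFourierCoeff.const_mul {f : ℝ → ℂ} {ω : ℝ} {c : ℂ} (h : HasFourierCoeff f ω c) (a : ℂ) :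
    HasFourierCoeff (fun x => a * f x) ω (a * c) := by
  rw [hasFourierCoeff_iff] at h ⊢
  refine (h.const_mul a).congr fun M => ?_
  simp only [mul_assoc a, intervalIntegral.integral_const_mul]
  ring

lemma HasFourierCoeff.sum {g : ℕ → ℝ → ℂ} {ω : ℝ} {c : ℕ → ℂ} (hg : ∀ m, Continuous (g m))
    (h : ∀ m, HasFourierCoeff (g m) ω (c m)) (n : ℕ) :
    HasFourierCoeff (fun x => ∑ m ∈ Finset.range n, g m x) ω (∑ m ∈ Finset.range n, c m) := by
  simp only [hasFourierCoeff_iff] at h ⊢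
  refine (tendsto_finsetSum _ fun m _ => h m).congr fun M => ?_
  simp only [Finset.sum_mul]
  rw [intervalIntegral.integral_finsetSum, Finset.mul_sum]
  exact fun m _ => ((hg m).mul (continuous_fourierChar ω)).intervalIntegrable _ _

/-- Translating by `a` multiplies the coefficient at `ω` by `e^{2πiωa}`: shifting the window
`[-M, M]` by `a` changes the integral by a bounded amount, negligible after division by `2M`. -/
lemma HasFourierCoeff.translate {f : ℝ → ℂ} {ω : ℝ} {c : ℂ} (hc : Continuous f) {B : ℝ}
    (hB : ∀ x, ‖f x‖ ≤ B) (h : HasFourierCoeff f ω c) (a : ℝ) :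
    HasFourierCoeff (fun x => f (x + a)) ω (fourierChar ω (-a) * c) := by
  rw [hasFourierCoeff_iff] at h ⊢
  set F : ℝ → ℂ := fun x => f x * fourierChar ω x with hF
  have hFc : Continuous F := hc.mul (continuous_fourierChar ω)
  have hFi : ∀ p q, IntervalIntegrable F volume p q := fun p q => hFc.intervalIntegrable p q
  have hFB : ∀ x, ‖F x‖ ≤ B := fun x => by
    rw [hF, norm_mul, norm_fourierChar, mul_one]; exact hB x
  have hI : ∀ M : ℝ, ∫ x in (-M)..M, f (x + a) * fourierChar ω x =
      fourierChar ω (-a) * ∫ x in (-M + a)..(M + a), F x := fun M => by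
    rw [← intervalIntegral.integral_comp_add_right F a, ← intervalIntegral.integral_const_mul]
    refine intervalIntegral.integral_congr fun x _ => ?_
    have : fourierChar ω x = fourierChar ω (-a) * fourierChar ω (x + a) := by
      rw [← fourierChar_add]; congr 1; ring
    simp only [hF]
    rw [this]; ring
  have hD : ∀ M : ℝ, ‖(∫ x in (-M + a)..(M + a), F x) - ∫ x in (-M)..M, F x‖ ≤ 2 * (B * |a|) := by
    intro M
    rw [intervalIntegral.integral_interval_sub_interval_comm (hFi _ _) (hFi _ _) (hFi _ _)]
    have h1 := intervalIntegral.norm_integral_le_of_norm_le_const (a := -M + a) (b := -M)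
      (fun x _ => hFB x)
    have h2 := intervalIntegral.norm_integral_le_of_norm_le_const (a := M + a) (b := M)
      (fun x _ => hFB x)
    rw [sub_add_cancel_left, abs_neg] at h1 h2
    linarith [norm_sub_le (∫ x in (-M + a)..(-M), F x) (∫ x in (M + a)..M, F x)]
  have hE : Tendsto (fun M : ℝ => (2 * (M : ℂ))⁻¹ *
      ((∫ x in (-M + a)..(M + a), F x) - ∫ x in (-M)..M, F x)) atTop (𝓝 0) := by
    have hlim : Tendsto (fun M : ℝ => (B * |a|) * M⁻¹) atTop (𝓝 0) := by
      simpa using tendsto_inv_atTop_zero.const_mul (B * |a|)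
    refine squeeze_zero_norm' ?_ hlim
    filter_upwards [eventually_gt_atTop 0] with M hM
    rw [norm_mul, norm_inv, norm_mul, Complex.norm_ofNat, Complex.norm_real, Real.norm_of_nonneg hM.le]
    refine (mul_le_mul_of_nonneg_left (hD M) (by positivity)).trans (le_of_eq ?_)
    field_simp
  have := (h.add hE).const_mul (fourierChar ω (-a))
  rw [add_zero] at this
  refine this.congr fun M => ?_
  rw [hI]; ring

lemma HasFourierCoeff.of_tendstoUniformly {G : ℕ → ℝ → ℂ} {g : ℝ → ℂ} {ω : ℝ} {c : ℕ → ℂ} {c₀ : ℂ}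
    (hG : ∀ n, Continuous (G n)) (hu : TendstoUniformly G g atTop)
    (h : ∀ n, HasFourierCoeff (G n) ω (c n)) (hlim : Tendsto c atTop (𝓝 c₀)) :
    HasFourierCoeff g ω c₀ := by
  have hg : Continuous g := hu.continuous (Eventually.of_forall hG).frequently
  simp only [hasFourierCoeff_iff] at h ⊢
  refine TendstoUniformly.tendsto_of_eventually_tendsto
    (F := fun n (M : ℝ) => (2 * (M : ℂ))⁻¹ * ∫ x in (-M)..M, G n x * fourierChar ω x)
    (p := atTop) ?_ (Eventually.of_forall h) hlim
  rw [Metric.tendstoUniformly_iff] at hu ⊢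
  intro ε hε
  filter_upwards [hu (ε / 2) (half_pos hε)] with n hn M
  refine lt_of_le_of_lt ?_ (half_lt_self hε)
  have hi : ∀ u : ℝ → ℂ, Continuous u →
      IntervalIntegrable (fun x => u x * fourierChar ω x) volume (-M) M := fun u hu =>
    (hu.mul (continuous_fourierChar ω)).intervalIntegrable _ _
  rw [dist_eq_norm, ← mul_sub, ← intervalIntegral.integral_sub (hi g hg) (hi (G n) (hG n))]
  have h1 : ‖∫ x in (-M)..M, (g x * fourierChar ω x - G n x * fourierChar ω x)‖
      ≤ ε / 2 * |M - -M| := by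
    refine intervalIntegral.norm_integral_le_of_norm_le_const fun x _ => ?_
    rw [← sub_mul, norm_mul, norm_fourierChar, mul_one, ← dist_eq_norm]
    exact (hn x).le
  have h2 : ‖(2 * (M : ℂ))⁻¹‖ = |M - -M|⁻¹ := by
    rw [norm_inv, sub_neg_eq_add, ← two_mul, ← Real.norm_eq_abs, norm_mul, norm_mul]
    simp
  rw [norm_mul, h2]
  refine (mul_le_mul_of_nonneg_left h1 (by positivity)).trans ?_
  rw [mul_left_comm]
  exact mul_le_of_le_one_right (by positivity) inv_mul_le_one

lemma hasFourierCoeff_avgOp {f : ℝ → ℂ} {ω : ℝ} {c : ℂ} (hc : Continuous f) {B : ℝ}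
    (hB : ∀ x, ‖f x‖ ≤ B) (h : HasFourierCoeff f ω c) (L : ℝ) (n : ℕ) :
    HasFourierCoeff (avgOp f L n) ω
      ((n : ℂ)⁻¹ * ∑ m ∈ Finset.range n, fourierChar ω (-L) ^ m * c) := by
  refine HasFourierCoeff.const_mul (HasFourierCoeff.sum (fun m => by fun_prop) (fun m => ?_) n) _
  rw [← fourierChar_neg_nat_mul]
  exact h.translate hc hB _

/-- Averages of the powers of a unit complex number other than `1` tend to `0`. -/
lemma tendsto_avg_pow_zero {z : ℂ} (hz : ‖z‖ = 1) (hz1 : z ≠ 1) (c : ℂ) :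
    Tendsto (fun n : ℕ => (n : ℂ)⁻¹ * ∑ m ∈ Finset.range n, z ^ m * c) atTop (𝓝 0) := by
  refine squeeze_zero_norm (fun n => ?_)
    (tendsto_const_div_atTop_nhds_zero_nat (2 / ‖z - 1‖ * ‖c‖))
  rw [← Finset.sum_mul, geom_sum_eq hz1, norm_mul, norm_mul, norm_div, norm_inv,
    Complex.norm_natCast, div_eq_inv_mul _ (n : ℝ)]
  have : ‖z ^ n - 1‖ ≤ 2 := by
    refine (norm_sub_le _ _).trans ?_
    rw [norm_pow, hz, one_pow, norm_one]; norm_num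
  gcongr

/-! ### Periodization -/

/-- periodization of a Bohr almost periodic function via averaging. -/
theorem periodization_exists (f : ℝ → ℂ) (hf : BohrAP f) (Fhat : ℝ → ℂ)
    (hFhat : ∀ ω : ℝ, HasFourierCoeff f ω (Fhat ω)) (L : ℝ) (hL : 0 < L) :
    ∃ fL : ℝ → ℂ,
      TendstoUniformly (fun n x => avgOp f L n x) fL atTop ∧
      Continuous fL ∧
      Function.Periodic fL L ∧
      (∀ ω : ℝ,
        ((∃ n : ℤ, L * ω = (n : ℝ)) → HasFourierCoeff fL ω (Fhat ω)) ∧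
        (¬ (∃ n : ℤ, L * ω = (n : ℝ)) → HasFourierCoeff fL ω 0)) := by
  obtain ⟨B, hB0, hB⟩ := hf.exists_bound
  obtain ⟨g, hg⟩ := hf.exists_tendstoUniformly_avgOp L
  have hcont := fun n => continuous_avgOp hf.1 L n
  have hcoeff := fun ω n => hasFourierCoeff_avgOp hf.1 hB (hFhat ω) L n
  refine ⟨g, hg, hg.continuous (Eventually.of_forall hcont).frequently, fun x => ?_, fun ω => ⟨?_, ?_⟩⟩
  · have h1 := (hg.tendsto_at (x + L)).sub (hg.tendsto_at x)
    have h2 : Tendsto (fun n => avgOp f L n (x + L) - avgOp f L n x) atTop (𝓝 0) :=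
      squeeze_zero_norm (fun n => norm_avgOp_add_sub_le hB L n x)
        (tendsto_const_div_atTop_nhds_zero_nat _)
    exact sub_eq_zero.1 (tendsto_nhds_unique h1 h2)
  · intro hω
    refine HasFourierCoeff.of_tendstoUniformly hcont hg (hcoeff ω) ?_
    refine tendsto_const_nhds.congr' ?_
    -- The average over an empty range is `0`, so `n = 0` has to be left out.
    filter_upwards [eventually_ne_atTop 0] with n hn
    rw [(fourierChar_neg_eq_one_iff ω L).2 hω]
    simp [hn]
  · intro hω
    exact HasFourierCoeff.of_tendstoUniformly hcont hg (hcoeff ω)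
      (tendsto_avg_pow_zero (norm_fourierChar _ _)
        (fun h => hω ((fourierChar_neg_eq_one_iff ω L).1 h)) _)
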